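/- Let d ≥ 1 and let K : 𝕋^d → ℝ^d be a measurable kernel satisfying either (i) K is bounded, or (ii) K(−x) = −K(x) for all x, K(0) = 0, and sup_x |x|·|K(x)| < ∞, where |x| denotes the distance from x to 0 in 𝕋^d. For k ∈ ℤ^d ∖ {0} and a probability measure μ on 𝕋^d define Φ_k(μ) := ∬_{𝕋^d × 𝕋^d} (k·K(x−y)) e_k(x) dμ(x) dμ(y) in case (i), and Φ_k(μ) := (1/2) ∬_{𝕋^d × 𝕋^d} (k·K(x−y)) (e_k(x) − e_k(y)) dμ(x) dμ(y) in case (ii). Then for every α > d/2 + 2 there exists a constant C > 0, depending only on α, d, and ‖K‖_{L^∞} in case (i), respectively sup_x |x||K(x)| in case (ii), such that for every integer N ≥ 2, every probability measure ρ̄ on 𝕋^d, and every probability measure ρ_N on (𝕋^d)^N with H(ρ_N | ρ̄^{⊗N}) < ∞: ∫_{(𝕋^d)^N} Σ_{k ∈ ℤ^d ∖ {0}} ⟨k⟩^{−2α} | Φ_k(μ_N) − Φ_k(ρ̄) |² dρ_N ≤ (C/N) ( H(ρ_N | ρ̄^{⊗N}) + 1 ), where μ_N = (1/N) Σ_{i=1}^N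 δ_{x_i} is the empirical measure of (x_1,…,x_N). -/

import Mathlib

open MeasureTheory Classical

/-- The `d`-dimensional torus `𝕋^d = (ℝ/2πℤ)^d`. -/
abbrev Torus (d : ℕ) := Fin d → AddCircle (2 * Real.pi)

/-- The Fourier character `e_k(x) = exp(√−1 k·x)` on the torus, for `k ∈ ℤ^d`. -/
noncomputable def ek (d : ℕ) (k : Fin d → ℤ) (x : Torus d) : ℂ :=
  ∏ j, fourier (k j) (x j)

/-- The relative entropy `H(μ|ν) := ∫ (dμ/dν) log(dμ/dν) dν` if `μ ≪ ν` (and the integrand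
is integrable; otherwise `+∞`), with values in the extended reals. -/
noncomputable def relEntropy {E : Type*} [MeasurableSpace E] (μ ν : Measure E) : EReal :=
  if μ ≪ ν ∧ Integrable
      (fun x => (μ.rnDeriv ν x).toReal * Real.log (μ.rnDeriv ν x).toReal) ν
  then ((∫ x, (μ.rnDeriv ν x).toReal * Real.log (μ.rnDeriv ν x).toReal ∂ν : ℝ) : EReal)
  else ⊤

/-- The empirical measure `μ_N = N⁻¹ ∑_{i=1}^N δ_{x_i}` of a configuration
`x ∈ (𝕋^d)^N`. -/
noncomputable def empiricalMeasure (d N : ℕ) (x : Fin N → Torus d) : Measure (Torus d) :=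
  (N : ENNReal)⁻¹ • ∑ i, Measure.dirac (x i)

/-- Case (i) pairing: `Φ_k(μ) = ∬ (k·K(x−y)) e_k(x) dμ(x) dμ(y)`. -/
noncomputable def pairK₁ (d : ℕ) (K : Torus d → EuclideanSpace ℝ (Fin d))
    (k : Fin d → ℤ) (μ : Measure (Torus d)) : ℂ :=
  ∫ x, ∫ y, ((∑ j, (k j : ℝ) * K (x - y) j : ℝ) : ℂ) * ek d k x ∂μ ∂μ

/-- Case (ii) (symmetrized) pairing:
`Φ_k(μ) = (1/2) ∬ (k·K(x−y)) (e_k(x) − e_k(y)) dμ(x) dμ(y)`. -/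
noncomputable def pairK₂ (d : ℕ) (K : Torus d → EuclideanSpace ℝ (Fin d))
    (k : Fin d → ℤ) (μ : Measure (Torus d)) : ℂ :=
  (2 : ℂ)⁻¹ *
    ∫ x, ∫ y, ((∑ j, (k j : ℝ) * K (x - y) j : ℝ) : ℂ) * (ek d k x - ek d k y) ∂μ ∂μ

/-!
Each `Φ_k(μ_N)` is a V-statistic, the average of a kernel over the pairs `(x_i, x_j)`. In case (i)
the kernel is bounded by a multiple of `⟨k⟩`; in case (ii) the difference `e_k(x) − e_k(y)` vanishes
to first order at `x = y`, which compensates the singularity of `K` and leaves a bound of order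
`⟨k⟩²`. A V-statistic with kernel bounded by `M` changes by at most `4M/N` when one `x_i` changes,
so McDiarmid's inequality makes it sub-Gaussian under `ρ̄^{⊗N}` with variance proxy `4M²/N`, around
a mean that differs from `Φ_k(ρ̄)` by `2M/N` at most, the contribution of the diagonal pairs. Hence
the exponential of a suitable multiple of `N/M²` times the squared fluctuation has bounded
expectation, and the Donsker–Varadhan inequality carries this over to a second moment bound under
`ρ_N` at the price of the relative entropy. The weighted sum over `k` converges by the choice of
`α`.
-/

section Subgaussian

open ProbabilityTheory Real
open scoped NNReal ENNReal

variable {Ω Ω' : Type*} {mΩ : MeasurableSpace Ω} {mΩ' : MeasurableSpace Ω'}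

lemma hasSubgaussianMGF_add_comp_snd {μ : Measure Ω} {ν : Measure Ω'} [SFinite μ] [SFinite ν]
    {Y : Ω × Ω' → ℝ} {Z : Ω' → ℝ} {a b : ℝ≥0} (hYm : AEStronglyMeasurable Y (μ.prod ν))
    (hY : ∀ ω', HasSubgaussianMGF (fun ω ↦ Y (ω, ω')) a μ) (hZ : HasSubgaussianMGF Z b ν) :
    HasSubgaussianMGF (fun p ↦ Y p + Z p.2) (a + b) (μ.prod ν) := by
  have hexp (t : ℝ) : (fun p : Ω × Ω' ↦ exp (t * (Y p + Z p.2))) =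
      fun p ↦ exp (t * Y p) * exp (t * Z p.2) := by
    ext p; rw [mul_add, exp_add]
  have hfiber (t : ℝ) (ω' : Ω') : ∫ ω, exp (t * Y (ω, ω')) * exp (t * Z ω') ∂μ ≤
      exp (a * t ^ 2 / 2) * exp (t * Z ω') := by
    rw [integral_mul_const]
    exact mul_le_mul_of_nonneg_right ((hY ω').mgf_le t) (exp_nonneg _)
  have hdom (t : ℝ) : Integrable (fun ω' ↦ exp (a * t ^ 2 / 2) * exp (t * Z ω')) ν :=
    (hZ.integrable_exp_mul t).const_mul _
  have hint (t : ℝ) : Integrable (fun p ↦ exp (t * (Y p + Z p.2))) (μ.prod ν) := by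
    have hm : AEStronglyMeasurable (fun p ↦ exp (t * (Y p + Z p.2))) (μ.prod ν) :=
      continuous_exp.comp_aestronglyMeasurable
        ((hYm.add hZ.aestronglyMeasurable.comp_snd).const_mul t)
    rw [hexp] at hm ⊢
    refine (integrable_prod_iff' hm).2 ⟨ae_of_all _ fun ω' ↦
      ((hY ω').integrable_exp_mul t).mul_const (exp (t * Z ω')),
      (hdom t).mono' ?_ (ae_of_all _ fun ω' ↦ ?_)⟩
    · exact hm.norm.prod_swap.integral_prod_right'
    · have hnonneg : 0 ≤ ∫ ω, exp (t * Y (ω, ω')) * exp (t * Z ω') ∂μ :=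
        integral_nonneg fun ω ↦ mul_nonneg (exp_nonneg _) (exp_nonneg _)
      simpa only [norm_mul, norm_eq_abs, abs_exp, abs_of_nonneg hnonneg] using hfiber t ω'
  refine ⟨hint, fun t ↦ ?_⟩
  have hint' := hint t
  rw [hexp] at hint'
  calc mgf (fun p ↦ Y p + Z p.2) (μ.prod ν) t
      = ∫ ω', ∫ ω, exp (t * Y (ω, ω')) * exp (t * Z ω') ∂μ ∂ν := by
        rw [mgf, hexp, integral_prod_symm _ hint']
    _ ≤ ∫ ω', exp (a * t ^ 2 / 2) * exp (t * Z ω') ∂ν :=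
        integral_mono hint'.integral_prod_right (hdom t) (hfiber t)
    _ ≤ exp (a * t ^ 2 / 2) * exp (b * t ^ 2 / 2) := by
        rw [integral_const_mul]
        exact mul_le_mul_of_nonneg_left (hZ.mgf_le t) (exp_nonneg _)
    _ = exp ((a + b : ℝ≥0) * t ^ 2 / 2) := by
        rw [← exp_add]; push_cast; ring_nf

/-- The bounded differences condition of McDiarmid's inequality: changing the `i`-th coordinate
changes `f` by at most `c i`. -/
def HasBoundedDifferences {n : ℕ} {X : Fin n → Type*} (f : (∀ i, X i) → ℝ) (c : Fin n → ℝ≥0) :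
    Prop :=
  ∀ x i a, |f (Function.update x i a) - f x| ≤ c i

namespace HasBoundedDifferences

variable {n : ℕ}

lemma insertNth_zero_mem_Icc {X : Fin (n + 1) → Type*} {f : (∀ i, X i) → ℝ} {c : Fin (n + 1) → ℝ≥0}
    (hc : HasBoundedDifferences f c) (y : ∀ j, X (Fin.succAbove 0 j)) (a : X 0) :
    f (Fin.insertNth 0 a y) ∈ Set.Icc (⨅ a', f (Fin.insertNth 0 a' y))
      ((⨅ a', f (Fin.insertNth 0 a' y)) + c 0) := by
  have hosc (a' : X 0) : |f (Fin.insertNth 0 a y) - f (Fin.insertNth 0 a' y)| ≤ c 0 := by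
    simpa only [Fin.update_insertNth] using hc (Fin.insertNth 0 a' y) 0 a
  have : Nonempty (X 0) := ⟨a⟩
  refine ⟨ciInf_le ⟨f (Fin.insertNth 0 a y) - c 0, ?_⟩ a, ?_⟩
  · rintro _ ⟨a', rfl⟩
    linarith [(abs_le.1 (hosc a')).2]
  · rw [← sub_le_iff_le_add]
    exact le_ciInf fun a' ↦ by linarith [(abs_le.1 (hosc a')).2]

lemma hasSubgaussianMGF_insertNth_zero {X : Fin (n + 1) → Type*} [∀ i, MeasurableSpace (X i)]
    {μ : Measure (X 0)} [IsProbabilityMeasure μ] {f : (∀ i, X i) → ℝ} {c : Fin (n + 1) → ℝ≥0}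
    (hc : HasBoundedDifferences f c) (y : ∀ j, X (Fin.succAbove 0 j))
    (hf : Measurable fun a ↦ f (Fin.insertNth 0 a y)) :
    HasSubgaussianMGF
      (fun a ↦ f (Fin.insertNth 0 a y) - ∫ a', f (Fin.insertNth 0 a' y) ∂μ) ((c 0 / 2) ^ 2) μ := by
  simpa only [add_sub_cancel_left, NNReal.nnnorm_eq] using
    hasSubgaussianMGF_of_mem_Icc hf.aemeasurable (ae_of_all μ (hc.insertNth_zero_mem_Icc y))

lemma integral_insertNth_zero {X : Fin (n + 1) → Type*} [MeasurableSpace (X 0)]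
    {μ : Measure (X 0)} [IsProbabilityMeasure μ] {f : (∀ i, X i) → ℝ} {c : Fin (n + 1) → ℝ≥0}
    (hc : HasBoundedDifferences f c) (hf : ∀ y, Measurable fun a ↦ f (Fin.insertNth 0 a y)) :
    HasBoundedDifferences (fun y : ∀ j, X (Fin.succAbove 0 j) ↦ ∫ a, f (Fin.insertNth 0 a y) ∂μ)
      (fun j ↦ c (Fin.succAbove 0 j)) := by
  intro y j b
  have hint (y : ∀ j, X (Fin.succAbove 0 j)) : Integrable (fun a ↦ f (Fin.insertNth 0 a y)) μ :=
    .of_mem_Icc _ _ (hf y).aemeasurable (ae_of_all μ (hc.insertNth_zero_mem_Icc y))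
  have hdiff (a : X 0) : ‖f (Fin.insertNth 0 a (Function.update y j b)) -
      f (Fin.insertNth 0 a y)‖ ≤ c (Fin.succAbove 0 j) := by
    simpa only [Fin.insertNth_update, norm_eq_abs] using
      hc (Fin.insertNth 0 a y) (Fin.succAbove 0 j) b
  rw [← integral_sub (hint _) (hint _)]
  simpa using norm_integral_le_of_norm_le_const (ae_of_all μ hdiff)

theorem hasSubgaussianMGF {X : Fin n → Type*} [∀ i, MeasurableSpace (X i)]
    {μ : ∀ i, Measure (X i)} [∀ i, IsProbabilityMeasure (μ i)] {f : (∀ i, X i) → ℝ}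
    {c : Fin n → ℝ≥0} (hc : HasBoundedDifferences f c) (hf : Measurable f) :
    HasSubgaussianMGF (fun x ↦ f x - ∫ y, f y ∂Measure.pi μ) (∑ i, (c i / 2) ^ 2)
      (Measure.pi μ) := by
  induction n with
  | zero =>
    have hconst (x) : f x - ∫ y, f y ∂Measure.pi μ = 0 := by
      simp [Subsingleton.elim _ x]
    simp [hconst]
  | succ n ih =>
    let e := MeasurableEquiv.piFinSuccAbove X 0
    let ν := Measure.pi fun j ↦ μ (Fin.succAbove 0 j)
    let F : X 0 × (∀ j, X (Fin.succAbove 0 j)) → ℝ := fun p ↦ f (Fin.insertNth 0 p.1 p.2)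
    let g : (∀ j, X (Fin.succAbove 0 j)) → ℝ := fun y ↦ ∫ a, F (a, y) ∂μ 0
    have he : MeasurePreserving e (Measure.pi μ) ((μ 0).prod ν) :=
      measurePreserving_piFinSuccAbove μ 0
    have hFe (x) : F (e x) = f x := congrArg f (e.symm_apply_apply x)
    have hF : Measurable F := hf.comp e.symm.measurable
    have hFy (y) : Measurable fun a ↦ F (a, y) := hF.comp measurable_prodMk_right
    have hg : StronglyMeasurable g := hF.stronglyMeasurable.integral_prod_left'
    have hF_sub : HasSubgaussianMGF (fun p ↦ F p - ∫ y, g y ∂ν) (∑ i, (c i / 2) ^ 2)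
        ((μ 0).prod ν) := by
      have hsum : HasSubgaussianMGF (fun p ↦ F p - g p.2 + (g p.2 - ∫ y, g y ∂ν))
          ((c 0 / 2) ^ 2 + ∑ j, (c (Fin.succAbove 0 j) / 2) ^ 2) ((μ 0).prod ν) :=
        hasSubgaussianMGF_add_comp_snd
          (hF.sub (hg.measurable.comp measurable_snd)).aestronglyMeasurable
          (fun y ↦ hc.hasSubgaussianMGF_insertNth_zero (μ := μ 0) y (hFy y))
          (ih (μ := fun j ↦ μ (Fin.succAbove 0 j)) (hc.integral_insertNth_zero (μ := μ 0) hFy)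
            hg.measurable)
      simpa only [Fin.sum_univ_succAbove _ (0 : Fin (n + 1)), sub_add_sub_cancel] using hsum
    have hF_int : Integrable F ((μ 0).prod ν) :=
      (hF_sub.integrable.add (integrable_const (∫ y, g y ∂ν))).congr
        (ae_of_all _ fun p ↦ sub_add_cancel _ _)
    have hmean : ∫ x, f x ∂Measure.pi μ = ∫ y, g y ∂ν := by
      rw [← integral_prod_symm F hF_int, ← he.integral_comp' F]
      simp only [hFe]
    rw [← he.map_eq] at hF_sub
    simpa only [Function.comp_def, hFe, hmean] using hF_sub.of_map he.aemeasurable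

end HasBoundedDifferences

lemma lintegral_exp_mul_gaussianReal (t : ℝ) :
    ∫⁻ z, ENNReal.ofReal (exp (t * z)) ∂gaussianReal 0 1 = ENNReal.ofReal (exp (t ^ 2 / 2)) := by
  have hmgf : ∫ z, exp (t * z) ∂gaussianReal 0 1 = exp (t ^ 2 / 2) := by
    simpa [mgf] using congrFun (mgf_id_gaussianReal (μ := 0) (v := 1)) t
  rw [← hmgf, ofReal_integral_eq_lintegral_ofReal (integrable_exp_mul_gaussianReal t)
    (ae_of_all _ fun _ ↦ exp_nonneg _)]

lemma lintegral_exp_mul_sq_gaussianReal {b : ℝ} (hb : b < 1 / 2) :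
    ∫⁻ z, ENNReal.ofReal (exp (b * z ^ 2)) ∂gaussianReal 0 1 =
      ENNReal.ofReal (√(1 - 2 * b))⁻¹ := by
  have hdensity (z : ℝ) : (gaussianPDF 0 1 * fun z ↦ ENNReal.ofReal (exp (b * z ^ 2))) z =
      ENNReal.ofReal ((√(2 * π))⁻¹ * exp (-(1 / 2 - b) * z ^ 2)) := by
    simp only [Pi.mul_apply, gaussianPDF, gaussianPDFReal]
    rw [← ENNReal.ofReal_mul (by positivity), mul_assoc, ← exp_add]
    simp only [NNReal.coe_one, mul_one, sub_zero]
    ring_nf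
  rw [gaussianReal_of_var_ne_zero 0 one_ne_zero,
    lintegral_withDensity_eq_lintegral_mul _ (measurable_gaussianPDF _ _) (by fun_prop),
    lintegral_congr hdensity, ← ofReal_integral_eq_lintegral_ofReal
      ((integrable_exp_neg_mul_sq (sub_pos.2 hb)).const_mul _)
      (ae_of_all _ fun _ ↦ by positivity), integral_const_mul, integral_gaussian, ← sqrt_inv,
    ← sqrt_inv, ← sqrt_mul (by positivity)]
  congr 2
  have : 1 - 2 * b ≠ 0 := by linarith
  have : 1 / 2 - b ≠ 0 := by linarith
  field_simp

variable {μ : Measure Ω} {X : Ω → ℝ} {c : ℝ≥0} {s : ℝ}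

/-- The Gaussian linearization `exp (s x²) = 𝔼 exp (√(2s) x Z)`, with `Z` a standard normal
variable, reduces the bound to the one on the moment generating function. -/
lemma lintegral_exp_mul_sq_le_of_hasSubgaussianMGF [SFinite μ] (hX : HasSubgaussianMGF X c μ)
    (hs : 0 ≤ s) (hcs : 2 * c * s < 1) :
    ∫⁻ ω, ENNReal.ofReal (exp (s * X ω ^ 2)) ∂μ ≤ ENNReal.ofReal (√(1 - 2 * (c * s)))⁻¹ := by
  have hmgf (t : ℝ) : ∫⁻ ω, ENNReal.ofReal (exp (t * X ω)) ∂μ ≤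
      ENNReal.ofReal (exp (c * t ^ 2 / 2)) := by
    rw [← ofReal_integral_eq_lintegral_ofReal (hX.integrable_exp_mul t)
      (ae_of_all _ fun _ ↦ exp_nonneg _)]
    exact ENNReal.ofReal_le_ofReal (hX.mgf_le t)
  have hm : AEMeasurable (fun p : Ω × ℝ ↦ ENNReal.ofReal (exp (√(2 * s) * p.2 * X p.1)))
      (μ.prod (gaussianReal 0 1)) :=
    (measurable_exp.comp_aemeasurable ((measurable_snd.const_mul _).aemeasurable.mul
      hX.aemeasurable.comp_fst)).ennreal_ofReal
  calc ∫⁻ ω, ENNReal.ofReal (exp (s * X ω ^ 2)) ∂μ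
      = ∫⁻ ω, ∫⁻ z, ENNReal.ofReal (exp (√(2 * s) * z * X ω)) ∂gaussianReal 0 1 ∂μ := by
        refine lintegral_congr fun ω ↦ ?_
        simp_rw [mul_right_comm _ _ (X ω), lintegral_exp_mul_gaussianReal, mul_pow,
          sq_sqrt (mul_nonneg zero_le_two hs)]
        ring_nf
    _ = ∫⁻ z, ∫⁻ ω, ENNReal.ofReal (exp (√(2 * s) * z * X ω)) ∂μ ∂gaussianReal 0 1 :=
        lintegral_lintegral_swap hm
    _ ≤ ∫⁻ z, ENNReal.ofReal (exp (c * s * z ^ 2)) ∂gaussianReal 0 1 := by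
        refine lintegral_mono fun z ↦ (hmgf _).trans_eq ?_
        rw [mul_pow, sq_sqrt (mul_nonneg zero_le_two hs)]
        ring_nf
    _ = ENNReal.ofReal (√(1 - 2 * (c * s)))⁻¹ :=
        lintegral_exp_mul_sq_gaussianReal (by linarith)

lemma integrable_exp_mul_sq_of_hasSubgaussianMGF [SFinite μ] (hX : HasSubgaussianMGF X c μ)
    (hs : 0 ≤ s) (hcs : 2 * c * s < 1) : Integrable (fun ω ↦ exp (s * X ω ^ 2)) μ := by
  have hm : AEStronglyMeasurable (fun ω ↦ exp (s * X ω ^ 2)) μ :=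
    continuous_exp.comp_aestronglyMeasurable ((hX.aestronglyMeasurable.pow 2).const_mul s)
  exact (lintegral_ofReal_ne_top_iff_integrable hm (ae_of_all _ fun _ ↦ exp_nonneg _)).1
    (ne_top_of_le_ne_top ENNReal.ofReal_ne_top
      (lintegral_exp_mul_sq_le_of_hasSubgaussianMGF hX hs hcs))

lemma integral_exp_mul_sq_le_of_hasSubgaussianMGF [SFinite μ] (hX : HasSubgaussianMGF X c μ)
    (hs : 0 ≤ s) (hcs : 2 * c * s < 1) :
    ∫ ω, exp (s * X ω ^ 2) ∂μ ≤ (√(1 - 2 * (c * s)))⁻¹ := by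
  rw [← ENNReal.ofReal_le_ofReal_iff (by positivity), ofReal_integral_eq_lintegral_ofReal
    (integrable_exp_mul_sq_of_hasSubgaussianMGF hX hs hcs) (ae_of_all _ fun _ ↦ exp_nonneg _)]
  exact lintegral_exp_mul_sq_le_of_hasSubgaussianMGF hX hs hcs

end Subgaussian

section Entropy

open ProbabilityTheory InformationTheory Real
open scoped NNReal ENNReal

variable {Ω : Type*} {mΩ : MeasurableSpace Ω} {μ ν : Measure Ω} [IsProbabilityMeasure μ]
  [IsProbabilityMeasure ν]

lemma relEntropy_eq_klDiv : relEntropy μ ν = (klDiv μ ν : EReal) := by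
  by_cases h : μ ≪ ν ∧ Integrable (llr μ ν) μ
  · have hnonneg : 0 ≤ ∫ ω, llr μ ν ω ∂μ := by
      rw [← toReal_klDiv_of_measure_eq h.1 (by simp)]
      exact ENNReal.toReal_nonneg
    rw [relEntropy, if_pos ⟨h.1, (integrable_rnDeriv_mul_log_iff h.1).2 h.2⟩,
      integral_rnDeriv_mul_log h.1, klDiv_of_ac_of_integrable h.1 h.2]
    simp [EReal.coe_ennreal_ofReal, hnonneg]
  · rw [relEntropy, if_neg fun h' ↦ h ⟨h'.1, (integrable_rnDeriv_mul_log_iff h'.1).1 h'.2⟩,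
      klDiv_eq_top_iff.2 fun hac hint ↦ h ⟨hac, hint⟩, EReal.coe_ennreal_top]

/-- The Donsker–Varadhan inequality: the difference of the two sides is the divergence of `μ` from
the tilted measure `ν.tilted f`. -/
lemma integral_le_toReal_klDiv_add_log_integral_exp (hkl : klDiv μ ν ≠ ∞) {f : Ω → ℝ}
    (hf : Integrable f μ) (hexp : Integrable (fun ω ↦ exp (f ω)) ν) :
    ∫ ω, f ω ∂μ ≤ (klDiv μ ν).toReal + log (∫ ω, exp (f ω) ∂ν) := by
  obtain ⟨hac, hint⟩ := klDiv_ne_top_iff.1 hkl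
  have := isProbabilityMeasure_tilted hexp
  have htilted : (klDiv μ (ν.tilted f)).toReal =
      (klDiv μ ν).toReal - ∫ ω, f ω ∂μ + log (∫ ω, exp (f ω) ∂ν) := by
    rw [toReal_klDiv_of_measure_eq (hac.trans (absolutelyContinuous_tilted hexp)) (by simp),
      toReal_klDiv_of_measure_eq hac (by simp), integral_llr_tilted_right hac hf hexp hint]
  linarith [htilted ▸ ENNReal.toReal_nonneg (a := klDiv μ (ν.tilted f))]

lemma integral_sq_le_of_hasSubgaussianMGF {X : Ω → ℝ} {c : ℝ≥0} (hX : HasSubgaussianMGF X c ν)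
    (hkl : klDiv μ ν ≠ ∞) (hX2 : Integrable (fun ω ↦ X ω ^ 2) μ) :
    ∫ ω, X ω ^ 2 ∂μ ≤ 2 * c * (2 * (klDiv μ ν).toReal + log 2) := by
  obtain rfl | hc := eq_or_ne c 0
  · have hX0 : X =ᵐ[μ] 0 := (klDiv_ne_top_iff.1 hkl).1 hX.ae_eq_zero_of_hasSubgaussianMGF_zero
    have hsq : (fun ω ↦ X ω ^ 2) =ᵐ[μ] 0 := hX0.mono fun ω hω ↦ by simp [hω]
    simp [integral_congr_ae hsq]
  have hc : (c : ℝ) ≠ 0 := mod_cast hc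
  let s : ℝ := (4 * c)⁻¹
  have hs : 0 ≤ s := by positivity
  have hcs : c * s = 1 / 4 := by simp only [s]; field_simp
  have hexp : Integrable (fun ω ↦ exp (s * X ω ^ 2)) ν :=
    integrable_exp_mul_sq_of_hasSubgaussianMGF hX hs (by linarith)
  have hlog : log (∫ ω, exp (s * X ω ^ 2) ∂ν) ≤ log 2 / 2 := by
    rw [← log_sqrt zero_le_two]
    refine log_le_log (integral_exp_pos hexp) ?_
    refine (integral_exp_mul_sq_le_of_hasSubgaussianMGF hX hs (by linarith)).trans_eq ?_
    rw [hcs, ← sqrt_inv]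
    norm_num
  have hdv := integral_le_toReal_klDiv_add_log_integral_exp hkl (hX2.const_mul s) hexp
  rw [integral_const_mul] at hdv
  calc ∫ ω, X ω ^ 2 ∂μ = 4 * c * (s * ∫ ω, X ω ^ 2 ∂μ) := by
        simp only [s]; field_simp
    _ ≤ 4 * c * ((klDiv μ ν).toReal + log 2 / 2) := by gcongr; linarith
    _ = 2 * c * (2 * (klDiv μ ν).toReal + log 2) := by ring

end Entropy

section VStatistic

open ProbabilityTheory InformationTheory
open scoped NNReal ENNReal

variable {X : Type*} {E F : Type*} [NormedAddCommGroup E] [NormedSpace ℝ E]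
  [NormedAddCommGroup F] [NormedSpace ℝ F] {N : ℕ} {φ : X → X → E} {M : ℝ≥0}

/-- The von Mises statistic (V-statistic) of the kernel `φ` at the sample `x`: the average of `φ`
over all pairs of sample points, the diagonal pairs included. -/
noncomputable def vStatistic (φ : X → X → E) (x : Fin N → X) : E :=
  ((N : ℝ)⁻¹) ^ 2 • ∑ i, ∑ j, φ (x i) (x j)

lemma map_vStatistic (L : E →L[ℝ] F) (φ : X → X → E) (x : Fin N → X) :
    L (vStatistic φ x) = vStatistic (fun a b ↦ L (φ a b)) x := by
  simp only [vStatistic, map_smul, map_sum]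

lemma norm_inv_sq_smul_sum_sum_le {a : Fin N → Fin N → E} {b : Fin N → Fin N → ℝ}
    (h : ∀ i j, ‖a i j‖ ≤ b i j) :
    ‖((N : ℝ)⁻¹) ^ 2 • ∑ i, ∑ j, a i j‖ ≤ ((N : ℝ)⁻¹) ^ 2 * ∑ i, ∑ j, b i j := by
  rw [norm_smul_of_nonneg (by positivity)]
  gcongr
  exact norm_sum_le_of_le _ fun i _ ↦ norm_sum_le_of_le _ fun j _ ↦ h i j

lemma norm_vStatistic_le (hM : ∀ a b, ‖φ a b‖ ≤ M) (x : Fin N → X) : ‖vStatistic φ x‖ ≤ M := by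
  refine (norm_inv_sq_smul_sum_sum_le fun i j ↦ hM (x i) (x j)).trans ?_
  obtain rfl | hN := eq_or_ne N 0
  · simp
  · have : (N : ℝ) ≠ 0 := mod_cast hN
    simp only [Finset.sum_const, Finset.card_univ, Fintype.card_fin, nsmul_eq_mul]
    field_simp
    rfl

lemma norm_vStatistic_update_sub_le (hM : ∀ a b, ‖φ a b‖ ≤ M) (x : Fin N → X) (k : Fin N)
    (a : X) : ‖vStatistic φ (Function.update x k a) - vStatistic φ x‖ ≤ 4 * M / N := by
  have hpair (i j : Fin N) :
      ‖φ (Function.update x k a i) (Function.update x k a j) - φ (x i) (x j)‖ ≤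
        (if i = k then 2 * (M : ℝ) else 0) + if j = k then 2 * (M : ℝ) else 0 := by
    by_cases h : i = k ∨ j = k
    · calc ‖φ (Function.update x k a i) (Function.update x k a j) - φ (x i) (x j)‖
          ≤ M + M := norm_sub_le_of_le (hM _ _) (hM _ _)
        _ ≤ _ := by
          have : (0 : ℝ) ≤ 2 * M := by positivity
          rcases h with h | h <;> rw [if_pos h] <;> split_ifs <;> linarith
    · obtain ⟨hi, hj⟩ := not_or.1 h
      simp [hi, hj]
  simp only [vStatistic, ← smul_sub, ← Finset.sum_sub_distrib]
  refine (norm_inv_sq_smul_sum_sum_le hpair).trans_eq ?_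
  have : (N : ℝ) ≠ 0 := mod_cast k.pos.ne'
  simp only [Finset.sum_add_distrib, Finset.sum_const, Finset.sum_ite_eq', Finset.mem_univ,
    if_true, ← Finset.mul_sum, Finset.card_univ, Fintype.card_fin, nsmul_eq_mul]
  field_simp
  ring

lemma hasBoundedDifferences_vStatistic {φ : X → X → ℝ} (hM : ∀ a b, ‖φ a b‖ ≤ M) :
    HasBoundedDifferences (vStatistic φ : (Fin N → X) → ℝ) fun _ ↦ 4 * M / N := fun x i a ↦ by
  simpa using norm_vStatistic_update_sub_le hM x i a

variable [MeasurableSpace X]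

lemma stronglyMeasurable_comp_eval_pair {Z ι : Type*} [TopologicalSpace Z] {ψ : X → X → Z}
    (hψ : StronglyMeasurable (Function.uncurry ψ)) (i j : ι) :
    StronglyMeasurable fun x : ι → X ↦ ψ (x i) (x j) :=
  hψ.comp_measurable (g := fun x : ι → X ↦ (x i, x j))
    ((measurable_pi_apply i).prodMk (measurable_pi_apply j))

lemma stronglyMeasurable_vStatistic (hφ : StronglyMeasurable (Function.uncurry φ)) :
    StronglyMeasurable (vStatistic φ : (Fin N → X) → E) :=
  (Finset.stronglyMeasurable_fun_sum _ fun i _ ↦ Finset.stronglyMeasurable_fun_sum _ fun j _ ↦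
    stronglyMeasurable_comp_eval_pair hφ i j).const_smul _

lemma integrable_norm_vStatistic_sub_sq (hφ : StronglyMeasurable (Function.uncurry φ))
    (hM : ∀ a b, ‖φ a b‖ ≤ M) (e : E) (μ : Measure (Fin N → X)) [IsFiniteMeasure μ] :
    Integrable (fun x ↦ ‖vStatistic φ x - e‖ ^ 2) μ := by
  have hbound (x : Fin N → X) : ‖‖vStatistic φ x - e‖ ^ 2‖ ≤ (M + ‖e‖) ^ 2 := by
    rw [norm_pow, norm_norm]
    gcongr
    exact norm_sub_le_of_le (norm_vStatistic_le hM x) le_rfl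
  exact .of_bound (((stronglyMeasurable_vStatistic hφ).sub
    stronglyMeasurable_const).norm.pow 2).aestronglyMeasurable _ (ae_of_all _ hbound)

lemma map_eval_prodMk_eval_pi {ι : Type*} [Fintype ι] {Y : ι → Type*}
    [∀ i, MeasurableSpace (Y i)] (μ : ∀ i, Measure (Y i)) [∀ i, IsProbabilityMeasure (μ i)]
    {i j : ι} (hij : i ≠ j) :
    (Measure.pi μ).map (fun x ↦ (x i, x j)) = (μ i).prod (μ j) := by
  have hindep : IndepFun (fun x : ∀ i, Y i ↦ x i) (fun x ↦ x j) (Measure.pi μ) :=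
    (iIndepFun_pi (X := fun _ ↦ id) fun _ ↦ aemeasurable_id).indepFun hij
  rw [(indepFun_iff_map_prod_eq_prod_map_map (measurable_pi_apply i).aemeasurable
    (measurable_pi_apply j).aemeasurable).1 hindep]
  congr 1 <;> exact (measurePreserving_eval μ _).map_eq

variable {ρ : Measure X} [IsProbabilityMeasure ρ]

lemma norm_integral_le_of_forall_norm_le {f : X → E} {C : ℝ} (hf : ∀ a, ‖f a‖ ≤ C) :
    ‖∫ a, f a ∂ρ‖ ≤ C := by
  simpa using norm_integral_le_of_norm_le_const (ae_of_all ρ hf)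

lemma norm_integral_integral_le (hM : ∀ a b, ‖φ a b‖ ≤ M) : ‖∫ a, ∫ b, φ a b ∂ρ ∂ρ‖ ≤ M :=
  norm_integral_le_of_forall_norm_le fun a ↦ norm_integral_le_of_forall_norm_le (hM a)

lemma map_integral_integral [CompleteSpace E] [CompleteSpace F] (L : E →L[ℝ] F)
    (hφ : StronglyMeasurable (Function.uncurry φ)) (hM : ∀ a b, ‖φ a b‖ ≤ M) :
    L (∫ a, ∫ b, φ a b ∂ρ ∂ρ) = ∫ a, ∫ b, L (φ a b) ∂ρ ∂ρ := by
  have hint (a : X) : Integrable (φ a) ρ :=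
    .of_bound (hφ.comp_measurable measurable_prodMk_left).aestronglyMeasurable M
      (ae_of_all _ (hM a))
  have hint' : Integrable (fun a ↦ ∫ b, φ a b ∂ρ) ρ :=
    .of_bound hφ.integral_prod_right.aestronglyMeasurable M
      (ae_of_all _ fun a ↦ norm_integral_le_of_forall_norm_le (hM a))
  simp only [← L.integral_comp_comm hint', ← L.integral_comp_comm (hint _)]

lemma integral_comp_eval_pair (hφ : StronglyMeasurable (Function.uncurry φ))
    (hM : ∀ a b, ‖φ a b‖ ≤ M) {i j : Fin N} (hij : i ≠ j) :
    ∫ x, φ (x i) (x j) ∂Measure.pi (fun _ : Fin N ↦ ρ) = ∫ a, ∫ b, φ a b ∂ρ ∂ρ := by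
  have hint : Integrable (Function.uncurry φ) (ρ.prod ρ) :=
    .of_bound hφ.aestronglyMeasurable M (ae_of_all _ fun p ↦ hM p.1 p.2)
  calc ∫ x, φ (x i) (x j) ∂Measure.pi (fun _ : Fin N ↦ ρ)
      = ∫ p, Function.uncurry φ p ∂ρ.prod ρ := by
        rw [← map_eval_prodMk_eval_pi (fun _ : Fin N ↦ ρ) hij, integral_map
          ((measurable_pi_apply i).prodMk (measurable_pi_apply j)).aemeasurable
          hφ.aestronglyMeasurable]
        rfl
    _ = ∫ a, ∫ b, φ a b ∂ρ ∂ρ := integral_prod _ hint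

lemma norm_integral_vStatistic_sub_le (hφ : StronglyMeasurable (Function.uncurry φ))
    (hM : ∀ a b, ‖φ a b‖ ≤ M) (hN : N ≠ 0) :
    ‖∫ x, vStatistic φ x ∂Measure.pi (fun _ : Fin N ↦ ρ) - ∫ a, ∫ b, φ a b ∂ρ ∂ρ‖ ≤
      2 * M / N := by
  have hN' : (N : ℝ) ≠ 0 := mod_cast hN
  let P := Measure.pi fun _ : Fin N ↦ ρ
  let m := ∫ a, ∫ b, φ a b ∂ρ ∂ρ
  have hint (i j : Fin N) : Integrable (fun x ↦ φ (x i) (x j)) P :=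
    .of_bound (stronglyMeasurable_comp_eval_pair hφ i j).aestronglyMeasurable M
      (ae_of_all _ fun x ↦ hM _ _)
  have hmean : ∫ x, vStatistic φ x ∂P =
      ((N : ℝ)⁻¹) ^ 2 • ∑ i, ∑ j, ∫ x, φ (x i) (x j) ∂P := by
    simp only [vStatistic, integral_smul, integral_finsetSum _ fun j _ ↦ hint _ j,
      integral_finsetSum _ fun i _ ↦ integrable_finsetSum _ fun j _ ↦ hint i j]
  have hm : m = ((N : ℝ)⁻¹) ^ 2 • ∑ _i : Fin N, ∑ _j : Fin N, m := by
    simp only [Finset.sum_const, Finset.card_univ, Fintype.card_fin, ← Nat.cast_smul_eq_nsmul ℝ,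
      smul_smul]
    field_simp
    rw [one_smul]
  have hdiag (i j : Fin N) : ‖∫ x, φ (x i) (x j) ∂P - m‖ ≤ if i = j then (2 * M : ℝ) else 0 := by
    split_ifs with hij
    · rw [two_mul]
      exact norm_sub_le_of_le (norm_integral_le_of_forall_norm_le fun x ↦ hM (x i) (x j))
        (norm_integral_integral_le hM)
    · simp [P, m, integral_comp_eval_pair hφ hM hij]
  change ‖∫ x, vStatistic φ x ∂P - m‖ ≤ _
  rw [hmean, hm]
  simp only [← smul_sub, ← Finset.sum_sub_distrib]
  refine (norm_inv_sq_smul_sum_sum_le hdiag).trans_eq ?_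
  simp only [Finset.sum_ite_eq, Finset.mem_univ, if_true, Finset.sum_const, Finset.card_univ,
    Fintype.card_fin, nsmul_eq_mul]
  field_simp

lemma hasSubgaussianMGF_vStatistic {φ : X → X → ℝ}
    (hφ : StronglyMeasurable (Function.uncurry φ)) (hM : ∀ a b, ‖φ a b‖ ≤ M) :
    HasSubgaussianMGF
      (fun x ↦ vStatistic φ x - ∫ y, vStatistic φ y ∂Measure.pi fun _ : Fin N ↦ ρ)
      (4 * M ^ 2 / N) (Measure.pi fun _ : Fin N ↦ ρ) := by
  have hproxy : ∑ _i : Fin N, (4 * M / N / 2) ^ 2 = 4 * M ^ 2 / N := by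
    obtain rfl | hN := eq_or_ne N 0
    · simp
    · have : (N : ℝ≥0) ≠ 0 := mod_cast hN
      simp only [Finset.sum_const, Finset.card_univ, Fintype.card_fin, nsmul_eq_mul]
      field_simp
      ring
  exact hproxy ▸ (hasBoundedDifferences_vStatistic hM).hasSubgaussianMGF
    (stronglyMeasurable_vStatistic hφ).measurable

lemma integral_vStatistic_sub_sq_le_of_real {φ : X → X → ℝ}
    (hφ : StronglyMeasurable (Function.uncurry φ)) (hM : ∀ a b, ‖φ a b‖ ≤ M) (hN : N ≠ 0)
    {ρN : Measure (Fin N → X)} [IsProbabilityMeasure ρN]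
    (hkl : klDiv ρN (Measure.pi fun _ ↦ ρ) ≠ ∞) :
    ∫ x, ‖vStatistic φ x - ∫ a, ∫ b, φ a b ∂ρ ∂ρ‖ ^ 2 ∂ρN ≤
      32 / N * M ^ 2 * ((klDiv ρN (Measure.pi fun _ ↦ ρ)).toReal + 1) := by
  let P := Measure.pi fun _ : Fin N ↦ ρ
  let m := ∫ a, ∫ b, φ a b ∂ρ ∂ρ
  let u := ∫ x, vStatistic φ x ∂P
  have hint (e : ℝ) := integrable_norm_vStatistic_sub_sq hφ hM e ρN
  have hfluct : ∫ x, ‖vStatistic φ x - u‖ ^ 2 ∂ρN ≤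
      8 / N * M ^ 2 * (2 * (klDiv ρN P).toReal + 1) := by
    simp only [Real.norm_eq_abs, sq_abs] at hint ⊢
    refine (integral_sq_le_of_hasSubgaussianMGF (hasSubgaussianMGF_vStatistic hφ hM) hkl
      (hint u)).trans ?_
    have hlog : Real.log 2 ≤ 1 := by linarith [Real.log_two_lt_d9]
    push_cast
    calc 2 * (4 * (M : ℝ) ^ 2 / N) * (2 * (klDiv ρN P).toReal + Real.log 2)
        = 8 / N * M ^ 2 * (2 * (klDiv ρN P).toReal + Real.log 2) := by ring
      _ ≤ 8 / N * M ^ 2 * (2 * (klDiv ρN P).toReal + 1) := by gcongr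
  have hbias : ‖u - m‖ ^ 2 ≤ 4 / N * M ^ 2 := by
    have hN1 : (1 : ℝ) ≤ N := mod_cast Nat.one_le_iff_ne_zero.2 hN
    calc ‖u - m‖ ^ 2 ≤ (2 * (M : ℝ) / N) ^ 2 := by
          gcongr
          exact norm_integral_vStatistic_sub_le hφ hM hN
      _ = 4 / N * (M : ℝ) ^ 2 / N := by ring
      _ ≤ 4 / N * (M : ℝ) ^ 2 := div_le_self (by positivity) hN1
  calc ∫ x, ‖vStatistic φ x - m‖ ^ 2 ∂ρN
      ≤ ∫ x, (2 * ‖vStatistic φ x - u‖ ^ 2 + 2 * ‖u - m‖ ^ 2) ∂ρN := by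
        refine integral_mono (hint m) (((hint u).const_mul 2).add (integrable_const _)) fun x ↦ ?_
        calc ‖vStatistic φ x - m‖ ^ 2 ≤ (‖vStatistic φ x - u‖ + ‖u - m‖) ^ 2 := by
              gcongr; exact norm_sub_le_norm_sub_add_norm_sub _ _ _
          _ ≤ 2 * (‖vStatistic φ x - u‖ ^ 2 + ‖u - m‖ ^ 2) := add_sq_le
          _ = _ := mul_add _ _ _
    _ = 2 * ∫ x, ‖vStatistic φ x - u‖ ^ 2 ∂ρN + 2 * ‖u - m‖ ^ 2 := by
        rw [integral_add ((hint u).const_mul 2) (integrable_const _), integral_const_mul]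
        simp
    _ ≤ 2 * (8 / N * M ^ 2 * (2 * (klDiv ρN P).toReal + 1)) + 2 * (4 / N * M ^ 2) := by gcongr
    _ = 32 / N * M ^ 2 * ((klDiv ρN P).toReal + 3 / 4) := by ring
    _ ≤ 32 / N * M ^ 2 * ((klDiv ρN P).toReal + 1) := by gcongr; norm_num

lemma integral_vStatistic_sub_sq_le {φ : X → X → ℂ}
    (hφ : StronglyMeasurable (Function.uncurry φ)) (hM : ∀ a b, ‖φ a b‖ ≤ M) (hN : N ≠ 0)
    {ρN : Measure (Fin N → X)} [IsProbabilityMeasure ρN]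
    (hkl : klDiv ρN (Measure.pi fun _ ↦ ρ) ≠ ∞) :
    ∫ x, ‖vStatistic φ x - ∫ a, ∫ b, φ a b ∂ρ ∂ρ‖ ^ 2 ∂ρN ≤
      64 / N * M ^ 2 * ((klDiv ρN (Measure.pi fun _ ↦ ρ)).toReal + 1) := by
  have hpart (L : ℂ →L[ℝ] ℝ) (hL : ∀ z, ‖L z‖ ≤ ‖z‖) :
      Integrable (fun x ↦ ‖L (vStatistic φ x - ∫ a, ∫ b, φ a b ∂ρ ∂ρ)‖ ^ 2) ρN ∧
      ∫ x, ‖L (vStatistic φ x - ∫ a, ∫ b, φ a b ∂ρ ∂ρ)‖ ^ 2 ∂ρN ≤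
        32 / N * M ^ 2 * ((klDiv ρN (Measure.pi fun _ ↦ ρ)).toReal + 1) := by
    have hLφ : StronglyMeasurable (Function.uncurry fun a b ↦ L (φ a b)) :=
      L.continuous.comp_stronglyMeasurable hφ
    have hLM (a b : X) : ‖L (φ a b)‖ ≤ M := (hL _).trans (hM a b)
    simp only [map_sub, map_vStatistic, map_integral_integral L hφ hM]
    exact ⟨integrable_norm_vStatistic_sub_sq hLφ hLM _ _,
      integral_vStatistic_sub_sq_le_of_real hLφ hLM hN hkl⟩
  obtain ⟨hre, hre_le⟩ := hpart Complex.reCLM Complex.abs_re_le_norm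
  obtain ⟨him, him_le⟩ := hpart Complex.imCLM Complex.abs_im_le_norm
  have hsplit (z : ℂ) : ‖z‖ ^ 2 = ‖Complex.reCLM z‖ ^ 2 + ‖Complex.imCLM z‖ ^ 2 := by
    rw [Complex.sq_norm, Complex.normSq_apply]
    simp [sq]
  simp only [hsplit]
  rw [integral_add hre him]
  exact (add_le_add hre_le him_le).trans_eq (by ring)

lemma integral_tsum_vStatistic_sub_sq_le {κ : Type*} [Countable κ] {w : κ → ℝ} {M : κ → ℝ≥0}
    (hw : ∀ k, 0 ≤ w k) (hwM : Summable fun k ↦ w k * M k ^ 2) {φ : κ → X → X → ℂ}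
    (hφ : ∀ k, StronglyMeasurable (Function.uncurry (φ k))) (hM : ∀ k a b, ‖φ k a b‖ ≤ M k)
    (hN : N ≠ 0) {ρN : Measure (Fin N → X)} [IsProbabilityMeasure ρN]
    (hkl : klDiv ρN (Measure.pi fun _ ↦ ρ) ≠ ∞) :
    ∫ x, ∑' k, w k * ‖vStatistic (φ k) x - ∫ a, ∫ b, φ k a b ∂ρ ∂ρ‖ ^ 2 ∂ρN ≤
      64 / N * (∑' k, w k * M k ^ 2) * ((klDiv ρN (Measure.pi fun _ ↦ ρ)).toReal + 1) := by
  let H := (klDiv ρN (Measure.pi fun _ : Fin N ↦ ρ)).toReal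
  let f (k : κ) (x : Fin N → X) := w k * ‖vStatistic (φ k) x - ∫ a, ∫ b, φ k a b ∂ρ ∂ρ‖ ^ 2
  have hf_nonneg (k x) : 0 ≤ f k x := mul_nonneg (hw k) (sq_nonneg _)
  have hf_int (k) : Integrable (f k) ρN :=
    (integrable_norm_vStatistic_sub_sq (hφ k) (hM k) _ ρN).const_mul (w k)
  have hf_le (k) : ∫ x, f k x ∂ρN ≤ 64 / N * (w k * M k ^ 2) * (H + 1) := by
    rw [integral_const_mul]
    calc w k * ∫ x, ‖vStatistic (φ k) x - ∫ a, ∫ b, φ k a b ∂ρ ∂ρ‖ ^ 2 ∂ρN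
        ≤ w k * (64 / N * M k ^ 2 * (H + 1)) :=
          mul_le_mul_of_nonneg_left (integral_vStatistic_sub_sq_le (hφ k) (hM k) hN hkl) (hw k)
      _ = 64 / N * (w k * M k ^ 2) * (H + 1) := by ring
  have hbound : Summable fun k ↦ 64 / N * (w k * M k ^ 2) * (H + 1) :=
    (hwM.mul_left _).mul_right _
  have hsum : Summable fun k ↦ ∫ x, f k x ∂ρN :=
    .of_nonneg_of_le (fun k ↦ integral_nonneg (hf_nonneg k)) hf_le hbound
  calc ∫ x, ∑' k, f k x ∂ρN = ∑' k, ∫ x, f k x ∂ρN :=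
        (integral_tsum_of_summable_integral_norm hf_int
          (by simpa only [Real.norm_of_nonneg (hf_nonneg _ _)] using hsum)).symm
    _ ≤ ∑' k, 64 / N * (w k * M k ^ 2) * (H + 1) := hsum.tsum_le_tsum hf_le hbound
    _ = 64 / N * (∑' k, w k * M k ^ 2) * (H + 1) := by rw [tsum_mul_right, tsum_mul_left]

end VStatistic

section EmpiricalMeasure

variable {d N : ℕ} {E : Type*} [NormedAddCommGroup E] [NormedSpace ℝ E] [CompleteSpace E]

lemma integral_empiricalMeasure (x : Fin N → Torus d) (f : Torus d → E) :
    ∫ y, f y ∂empiricalMeasure d N x = (N : ℝ)⁻¹ • ∑ i, f (x i) := by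
  rw [empiricalMeasure, integral_smul_measure,
    integral_finsetSum_measure fun i _ ↦ integrable_dirac (by simp)]
  simp

lemma integral_integral_empiricalMeasure (x : Fin N → Torus d) (φ : Torus d → Torus d → E) :
    ∫ y, ∫ z, φ y z ∂empiricalMeasure d N x ∂empiricalMeasure d N x = vStatistic φ x := by
  simp only [integral_empiricalMeasure, vStatistic, ← Finset.smul_sum, smul_smul, sq]

end EmpiricalMeasure

section Fourier

open scoped Real

lemma norm_prod_sub_prod_le {ι R : Type*} [NormedCommRing R] [NormOneClass R] (s : Finset ι)
    {f g : ι → R} (hf : ∀ i ∈ s, ‖f i‖ ≤ 1) (hg : ∀ i ∈ s, ‖g i‖ ≤ 1) :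
    ‖∏ i ∈ s, f i - ∏ i ∈ s, g i‖ ≤ ∑ i ∈ s, ‖f i - g i‖ := by
  induction s using Finset.cons_induction with
  | empty => simp
  | cons i s hi ih =>
    rw [Finset.forall_mem_cons] at hf hg
    have hprod : ‖∏ i ∈ s, f i‖ ≤ 1 :=
      (s.norm_prod_le f).trans (Finset.prod_le_one (fun _ _ ↦ norm_nonneg _) hf.2)
    rw [Finset.prod_cons, Finset.prod_cons, Finset.sum_cons]
    calc ‖f i * ∏ j ∈ s, f j - g i * ∏ j ∈ s, g j‖
        = ‖(f i - g i) * ∏ j ∈ s, f j + g i * (∏ j ∈ s, f j - ∏ j ∈ s, g j)‖ := by ring_nf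
      _ ≤ ‖f i - g i‖ * ‖∏ j ∈ s, f j‖ + ‖g i‖ * ‖∏ j ∈ s, f j - ∏ j ∈ s, g j‖ :=
          norm_add_le_of_le (norm_mul_le _ _) (norm_mul_le _ _)
      _ ≤ ‖f i - g i‖ * 1 + 1 * ∑ j ∈ s, ‖f j - g j‖ := by
          gcongr
          exacts [hg.1, ih hf.2 hg.2]
      _ = ‖f i - g i‖ + ∑ j ∈ s, ‖f j - g j‖ := by ring

lemma exists_coe_eq_abs_eq_norm {T : ℝ} (x : AddCircle T) :
    ∃ r : ℝ, (r : AddCircle T) = x ∧ |r| = ‖x‖ := by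
  obtain ⟨y, rfl⟩ := QuotientAddGroup.mk_surjective x
  refine ⟨y - round (T⁻¹ * y) * T, ?_, (AddCircle.norm_eq T).symm⟩
  have hperiod : ((round (T⁻¹ * y) * T : ℝ) : AddCircle T) = 0 :=
    (AddCircle.coe_eq_zero_iff T).2 ⟨round (T⁻¹ * y), zsmul_eq_mul ..⟩
  rw [AddCircle.coe_sub, hperiod, sub_zero]

lemma norm_fourier_apply {T : ℝ} (n : ℤ) (x : AddCircle T) : ‖fourier n x‖ = 1 := by
  rw [fourier_apply, Circle.norm_coe]

lemma norm_fourier_sub_one_le {T : ℝ} (n : ℤ) (x : AddCircle T) :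
    ‖fourier n x - 1‖ ≤ |2 * π * n / T| * ‖x‖ := by
  obtain ⟨r, rfl, hr⟩ := exists_coe_eq_abs_eq_norm x
  have hexp : fourier n (r : AddCircle T) =
      Complex.exp (Complex.I * ((2 * π * n / T * r : ℝ) : ℂ)) := by
    rw [fourier_coe_apply]
    push_cast
    ring_nf
  rw [hexp, ← hr, ← abs_mul]
  exact Real.norm_exp_I_mul_ofReal_sub_one_le

lemma norm_fourier_sub_fourier_le {T : ℝ} (n : ℤ) (x y : AddCircle T) :
    ‖fourier n x - fourier n y‖ ≤ |2 * π * n / T| * ‖x - y‖ := by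
  have hfactor : fourier n x - fourier n y = fourier n y * (fourier n (x - y) - 1) := by
    simp only [fourier_apply, mul_sub, mul_one, ← Circle.coe_mul, ← AddCircle.toCircle_add,
      ← smul_add, add_sub_cancel]
  rw [hfactor, norm_mul, norm_fourier_apply, one_mul]
  exact norm_fourier_sub_one_le n (x - y)

variable {d : ℕ}

lemma measurable_ek (k : Fin d → ℤ) : Measurable (ek d k) :=
  Finset.measurable_fun_prod _ fun j _ ↦
    (fourier (k j)).continuous.measurable.comp (measurable_pi_apply j)

lemma norm_ek (k : Fin d → ℤ) (x : Torus d) : ‖ek d k x‖ = 1 := by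
  rw [ek, norm_prod, Finset.prod_eq_one fun j _ ↦ norm_fourier_apply (k j) (x j)]

lemma norm_ek_sub_ek_le (k : Fin d → ℤ) (x y : Torus d) :
    ‖ek d k x - ek d k y‖ ≤ ∑ j, |(k j : ℝ)| * ‖x j - y j‖ := by
  refine (norm_prod_sub_prod_le _ (fun j _ ↦ (norm_fourier_apply (k j) (x j)).le)
    fun j _ ↦ (norm_fourier_apply (k j) (y j)).le).trans ?_
  refine Finset.sum_le_sum fun j _ ↦ (norm_fourier_sub_fourier_le _ _ _).trans_eq ?_
  rw [mul_div_cancel_left₀ _ (by positivity)]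

/-- The Japanese bracket `⟨k⟩ = (1 + |k|²)^{1/2}` of a lattice point. -/
noncomputable def japaneseBracket (k : Fin d → ℤ) : ℝ :=
  √(1 + ∑ j, (k j : ℝ) ^ 2)

lemma japaneseBracket_pos (k : Fin d → ℤ) : 0 < japaneseBracket k :=
  Real.sqrt_pos.2 (by positivity)

lemma one_add_sum_sq_rpow (k : Fin d → ℤ) (β : ℝ) :
    (1 + ∑ j, (k j : ℝ) ^ 2) ^ β = japaneseBracket k ^ (2 * β) := by
  rw [japaneseBracket, Real.sqrt_eq_rpow, ← Real.rpow_mul (by positivity)]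
  ring_nf

lemma abs_le_japaneseBracket (k : Fin d → ℤ) (j : Fin d) : |(k j : ℝ)| ≤ japaneseBracket k := by
  refine Real.abs_le_sqrt ?_
  have := Finset.single_le_sum (f := fun j ↦ (k j : ℝ) ^ 2) (fun _ _ ↦ sq_nonneg _)
    (Finset.mem_univ j)
  linarith

lemma abs_sum_mul_le_japaneseBracket_mul (k : Fin d → ℤ) (v : EuclideanSpace ℝ (Fin d)) :
    |∑ j, (k j : ℝ) * v j| ≤ japaneseBracket k * ‖v‖ := by
  rw [japaneseBracket, EuclideanSpace.norm_eq, ← Real.sqrt_mul (by positivity)]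
  refine Real.abs_le_sqrt ((Finset.sum_mul_sq_le_sq_mul_sq _ _ _).trans ?_)
  simp only [Real.norm_eq_abs, sq_abs]
  gcongr
  linarith

lemma norm_ek_sub_ek_le_mul_dist (k : Fin d → ℤ) (x y : Torus d) :
    ‖ek d k x - ek d k y‖ ≤ d * japaneseBracket k * dist (x - y) 0 := by
  calc ‖ek d k x - ek d k y‖ ≤ ∑ j, |(k j : ℝ)| * ‖x j - y j‖ := norm_ek_sub_ek_le k x y
    _ ≤ ∑ _j : Fin d, japaneseBracket k * ‖x - y‖ := by
        gcongr with j
        exacts [(japaneseBracket_pos k).le, abs_le_japaneseBracket k j, norm_le_pi_norm (x - y) j]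
    _ = d * japaneseBracket k * dist (x - y) 0 := by
        rw [Finset.sum_const, Finset.card_univ, Fintype.card_fin, nsmul_eq_mul, dist_zero_right,
          mul_assoc]

lemma intCast_mem_span_range_basisFun (k : Fin d → ℤ) :
    (fun j ↦ (k j : ℝ)) ∈ Submodule.span ℤ (Set.range (Pi.basisFun ℝ (Fin d))) :=
  (Module.Basis.mem_span_iff_repr_mem ..).2 fun j ↦ ⟨k j, by simp⟩

lemma summable_japaneseBracket_rpow_neg {r : ℝ} (hr : d < r) :
    Summable fun k : Fin d → ℤ ↦ japaneseBracket k ^ (-r) := by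
  let L : Submodule ℤ (Fin d → ℝ) := Submodule.span ℤ (Set.range (Pi.basisFun ℝ (Fin d)))
  let ι (k : Fin d → ℤ) : L := ⟨fun j ↦ k j, intCast_mem_span_range_basisFun k⟩
  have hι : Function.Injective ι := fun k l h ↦ funext fun j ↦ by
    simpa [ι] using congrFun (congrArg Subtype.val h) j
  have hι_zero : ι 0 = 0 := Subtype.ext (funext fun _ ↦ Int.cast_zero)
  have hrank : Module.finrank ℤ L = d := by rw [ZLattice.rank ℝ L, Module.finrank_fin_fun]
  have hsum : Summable fun k ↦ ‖ι k‖ ^ (-r) :=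
    (ZLattice.summable_norm_rpow L (-r) (by rw [hrank]; linarith)).comp_injective hι
  refine hsum.of_norm_bounded_eventually ?_
  filter_upwards [(Set.finite_singleton (0 : Fin d → ℤ)).compl_mem_cofinite] with k hk
  have hpos : 0 < ‖ι k‖ := norm_pos_iff.2 fun h ↦ hk (hι (h.trans hι_zero.symm))
  have hle : ‖ι k‖ ≤ japaneseBracket k :=
    (pi_norm_le_iff_of_nonneg (japaneseBracket_pos k).le).2 (abs_le_japaneseBracket k)
  rw [Real.norm_of_nonneg (Real.rpow_nonneg (japaneseBracket_pos k).le _)]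
  exact Real.rpow_le_rpow_of_nonpos hpos hle (by linarith [(Nat.cast_nonneg d : (0 : ℝ) ≤ d)])

end Fourier

section Interaction

open scoped NNReal

variable {d : ℕ}

lemma exists_integral_tsum_empiricalMeasure_sub_sq_le {α : ℝ} {m : ℕ} (hα : (d : ℝ) / 2 + m < α)
    (L : ℝ) :
    ∃ C : ℝ, 0 < C ∧ ∀ φ : (Fin d → ℤ) → Torus d → Torus d → ℂ,
      (∀ k, Measurable (Function.uncurry (φ k))) →
      (∀ k x y, ‖φ k x y‖ ≤ L * japaneseBracket k ^ m) →
      ∀ N : ℕ, N ≠ 0 →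
      ∀ (ρ : Measure (Torus d)) [IsProbabilityMeasure ρ]
        (ρN : Measure (Fin N → Torus d)) [IsProbabilityMeasure ρN],
        relEntropy ρN (Measure.pi fun _ ↦ ρ) < ⊤ →
        ∫ x, ∑' k : {k : Fin d → ℤ // k ≠ 0}, (1 + ∑ j, (k.1 j : ℝ) ^ 2) ^ (-α) *
            ‖∫ a, ∫ b, φ k a b ∂empiricalMeasure d N x ∂empiricalMeasure d N x -
              ∫ a, ∫ b, φ k a b ∂ρ ∂ρ‖ ^ 2 ∂ρN ≤
          C / N * ((relEntropy ρN (Measure.pi fun _ ↦ ρ)).toReal + 1) := by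
  let w (k : {k : Fin d → ℤ // k ≠ 0}) : ℝ := (1 + ∑ j, (k.1 j : ℝ) ^ 2) ^ (-α)
  let M (k : {k : Fin d → ℤ // k ≠ 0}) : ℝ≥0 := Real.nnabs (L * japaneseBracket k.1 ^ m)
  have hw (k) : 0 ≤ w k := Real.rpow_nonneg (by positivity) _
  have hwM_eq (k) : w k * M k ^ 2 = L ^ 2 * japaneseBracket k.1 ^ (-(2 * (α - m))) := by
    have hexponent : -(2 * (α - m)) = 2 * -α + (m * 2 : ℕ) := by push_cast; ring
    rw [hexponent, Real.rpow_add_natCast (japaneseBracket_pos k.1).ne', ← one_add_sum_sq_rpow,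
      Real.coe_nnabs, sq_abs, pow_mul]
    ring
  have hwM : Summable fun k ↦ w k * M k ^ 2 := by
    simp only [hwM_eq]
    exact ((summable_japaneseBracket_rpow_neg (by linarith)).subtype _).mul_left _
  have : 0 ≤ ∑' k, w k * M k ^ 2 :=
    tsum_nonneg fun k ↦ mul_nonneg (hw k) (sq_nonneg _)
  refine ⟨64 * ∑' k, w k * M k ^ 2 + 1, by positivity, ?_⟩
  intro φ hφ hφL N hN ρ _ ρN _ hρN
  rw [relEntropy_eq_klDiv] at hρN ⊢
  rw [EReal.toReal_coe_ennreal]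
  simp only [integral_integral_empiricalMeasure]
  refine (integral_tsum_vStatistic_sub_sq_le hw hwM (fun k ↦ (hφ k).stronglyMeasurable)
    (fun k a b ↦ (hφL k a b).trans (le_abs_self _)) hN ?_).trans ?_
  · intro h
    simp [h] at hρN
  · gcongr
    rw [div_mul_eq_mul_div]
    gcongr
    exact le_add_of_nonneg_right zero_le_one

/-- The integrand `(k·K(x−y)) e_k(x)` of the pairing `pairK₁`. -/
noncomputable def interactionKernel (K : Torus d → EuclideanSpace ℝ (Fin d)) (k : Fin d → ℤ)
    (x y : Torus d) : ℂ :=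
  ((∑ j, (k j : ℝ) * K (x - y) j : ℝ) : ℂ) * ek d k x

/-- The integrand `(k·K(x−y)) (e_k(x) − e_k(y)) / 2` of the pairing `pairK₂`: the symmetrization of
`interactionKernel` when `K` is odd. -/
noncomputable def symmInteractionKernel (K : Torus d → EuclideanSpace ℝ (Fin d)) (k : Fin d → ℤ)
    (x y : Torus d) : ℂ :=
  2⁻¹ * (((∑ j, (k j : ℝ) * K (x - y) j : ℝ) : ℂ) * (ek d k x - ek d k y))

variable {K : Torus d → EuclideanSpace ℝ (Fin d)} {B : ℝ}

lemma pairK₁_eq_integral_interactionKernel (k : Fin d → ℤ) (μ : Measure (Torus d)) :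
    pairK₁ d K k μ = ∫ x, ∫ y, interactionKernel K k x y ∂μ ∂μ :=
  rfl

lemma pairK₂_eq_integral_symmInteractionKernel (k : Fin d → ℤ) (μ : Measure (Torus d)) :
    pairK₂ d K k μ = ∫ x, ∫ y, symmInteractionKernel K k x y ∂μ ∂μ := by
  simp only [symmInteractionKernel, integral_const_mul, pairK₂]

lemma measurable_sum_intCast_mul_sub (hK : Measurable K) (k : Fin d → ℤ) :
    Measurable fun p : Torus d × Torus d ↦
      ((∑ j, (k j : ℝ) * K (p.1 - p.2) j : ℝ) : ℂ) := by
  have : Measurable fun p : Torus d × Torus d ↦ K (p.1 - p.2) :=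
    hK.comp (measurable_fst.sub measurable_snd)
  fun_prop

lemma measurable_interactionKernel (hK : Measurable K) (k : Fin d → ℤ) :
    Measurable (Function.uncurry (interactionKernel K k)) :=
  (measurable_sum_intCast_mul_sub hK k).mul ((measurable_ek k).comp measurable_fst)

lemma measurable_symmInteractionKernel (hK : Measurable K) (k : Fin d → ℤ) :
    Measurable (Function.uncurry (symmInteractionKernel K k)) :=
  ((measurable_sum_intCast_mul_sub hK k).mul
    (((measurable_ek k).comp measurable_fst).sub
      ((measurable_ek k).comp measurable_snd))).const_mul _

lemma norm_interactionKernel_le (hB : ∀ x, ‖K x‖ ≤ B) (k : Fin d → ℤ) (x y : Torus d) :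
    ‖interactionKernel K k x y‖ ≤ B * japaneseBracket k := by
  rw [interactionKernel, norm_mul, norm_ek, mul_one, Complex.norm_real, Real.norm_eq_abs,
    mul_comm B]
  exact (abs_sum_mul_le_japaneseBracket_mul k _).trans
    (mul_le_mul_of_nonneg_left (hB _) (japaneseBracket_pos k).le)

lemma norm_symmInteractionKernel_le (hB : ∀ x, dist x 0 * ‖K x‖ ≤ B) (k : Fin d → ℤ)
    (x y : Torus d) :
    ‖symmInteractionKernel K k x y‖ ≤ d * B / 2 * japaneseBracket k ^ 2 := by
  rw [symmInteractionKernel, norm_mul, norm_mul, norm_inv, Complex.norm_two, Complex.norm_real,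
    Real.norm_eq_abs]
  have hk := (japaneseBracket_pos k).le
  calc 2⁻¹ * (|∑ j, (k j : ℝ) * K (x - y) j| * ‖ek d k x - ek d k y‖)
      ≤ 2⁻¹ * (japaneseBracket k * ‖K (x - y)‖ * (d * japaneseBracket k * dist (x - y) 0)) := by
        gcongr
        exacts [abs_sum_mul_le_japaneseBracket_mul k _, norm_ek_sub_ek_le_mul_dist k x y]
    _ = d / 2 * japaneseBracket k ^ 2 * (dist (x - y) 0 * ‖K (x - y)‖) := by ring
    _ ≤ d / 2 * japaneseBracket k ^ 2 * B := by gcongr; exact hB _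
    _ = d * B / 2 * japaneseBracket k ^ 2 := by ring

end Interaction

theorem statement8_general (d : ℕ) (α B : ℝ) :
    ((d : ℝ) / 2 + 1 < α → ∃ C : ℝ, 0 < C ∧
      ∀ K : Torus d → EuclideanSpace ℝ (Fin d), Measurable K → (∀ x, ‖K x‖ ≤ B) →
        ∀ N : ℕ, 1 ≤ N →
        ∀ (ρ : Measure (Torus d)), IsProbabilityMeasure ρ →
        ∀ (ρN : Measure (Fin N → Torus d)), IsProbabilityMeasure ρN →
          relEntropy ρN (Measure.pi fun _ ↦ ρ) < ⊤ →
          ∫ x : Fin N → Torus d,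
              ∑' k : {k : Fin d → ℤ // k ≠ 0}, (1 + ∑ j, (k.1 j : ℝ) ^ 2) ^ (-α) *
                ‖pairK₁ d K k.1 (empiricalMeasure d N x) - pairK₁ d K k.1 ρ‖ ^ 2 ∂ρN
            ≤ C / N * ((relEntropy ρN (Measure.pi fun _ ↦ ρ)).toReal + 1)) ∧
    ((d : ℝ) / 2 + 2 < α → ∃ C : ℝ, 0 < C ∧
      ∀ K : Torus d → EuclideanSpace ℝ (Fin d), Measurable K → (∀ x, dist x 0 * ‖K x‖ ≤ B) →
        ∀ N : ℕ, 1 ≤ N →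
        ∀ (ρ : Measure (Torus d)), IsProbabilityMeasure ρ →
        ∀ (ρN : Measure (Fin N → Torus d)), IsProbabilityMeasure ρN →
          relEntropy ρN (Measure.pi fun _ ↦ ρ) < ⊤ →
          ∫ x : Fin N → Torus d,
              ∑' k : {k : Fin d → ℤ // k ≠ 0}, (1 + ∑ j, (k.1 j : ℝ) ^ 2) ^ (-α) *
                ‖pairK₂ d K k.1 (empiricalMeasure d N x) - pairK₂ d K k.1 ρ‖ ^ 2 ∂ρN
            ≤ C / N * ((relEntropy ρN (Measure.pi fun _ ↦ ρ)).toReal + 1)) := by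
  refine ⟨fun hα ↦ ?_, fun hα ↦ ?_⟩
  · obtain ⟨C, hC, hbound⟩ :=
      exists_integral_tsum_empiricalMeasure_sub_sq_le (m := 1) (by exact_mod_cast hα) B
    refine ⟨C, hC, fun K hK hB N hN ρ _ ρN _ hρN ↦ ?_⟩
    simpa only [pairK₁_eq_integral_interactionKernel] using
      hbound (interactionKernel K) (measurable_interactionKernel hK)
        (by simpa only [pow_one] using norm_interactionKernel_le hB) N (by lia) ρ ρN hρN
  · obtain ⟨C, hC, hbound⟩ :=
      exists_integral_tsum_empiricalMeasure_sub_sq_le (m := 2) (by exact_mod_cast hα) (d * B / 2)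
    refine ⟨C, hC, fun K hK hB N hN ρ _ ρN _ hρN ↦ ?_⟩
    simpa only [pairK₂_eq_integral_symmInteractionKernel] using
      hbound (symmInteractionKernel K) (measurable_symmInteractionKernel hK)
        (norm_symmInteractionKernel_le hB) N (by lia) ρ ρN hρN

/-- **Uniform estimate on the interaction term (Lemma 2.6 of Wang–Zhao–Zhu).**
Let `K : 𝕋^d → ℝ^d` satisfy either (i) `K` bounded (by `B`), or (ii) `K(−x) = −K(x)`,
`K(0) = 0` and `sup_x |x||K(x)| ≤ B`, where `|x| = dist(x,0)` on `𝕋^d`.  Then for every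
`α > d/2 + 2` there is a constant `C > 0`, depending only on `α`, `d` and `B`, such that
for every `N ≥ 2`, every probability measure `ρ̄` on `𝕋^d`, and every probability measure
`ρ_N` on `(𝕋^d)^N` with `H(ρ_N | ρ̄^{⊗N}) < ∞`:
`∫ ∑_{k ≠ 0} ⟨k⟩^{−2α} |Φ_k(μ_N) − Φ_k(ρ̄)|² dρ_N ≤ (C/N)(H(ρ_N | ρ̄^{⊗N}) + 1)`,
with `Φ_k` the pairing of the respective case. -/
theorem statement8 (d : ℕ) (hd : 1 ≤ d) (α : ℝ) (hα : (d : ℝ) / 2 + 2 < α) (B : ℝ) :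
    (∃ C : ℝ, 0 < C ∧
      ∀ K : Torus d → EuclideanSpace ℝ (Fin d), Measurable K →
        (∀ x, ‖K x‖ ≤ B) →
        ∀ N : ℕ, 2 ≤ N →
        ∀ (ρ : Measure (Torus d)), IsProbabilityMeasure ρ →
        ∀ (ρN : Measure (Fin N → Torus d)), IsProbabilityMeasure ρN →
          relEntropy ρN (Measure.pi fun _ => ρ) < ⊤ →
          ∫ x : Fin N → Torus d,
              ∑' k : {k : Fin d → ℤ // k ≠ 0},
                (1 + ∑ j, ((k.1 j : ℝ)) ^ 2) ^ (-α) *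
                  ‖pairK₁ d K k.1 (empiricalMeasure d N x) - pairK₁ d K k.1 ρ‖ ^ 2
            ∂ρN
          ≤ C / N * ((relEntropy ρN (Measure.pi fun _ => ρ)).toReal + 1)) ∧
    (∃ C : ℝ, 0 < C ∧
      ∀ K : Torus d → EuclideanSpace ℝ (Fin d), Measurable K →
        (∀ x, K (-x) = -K x) → K 0 = 0 →
        (∀ x, dist x 0 * ‖K x‖ ≤ B) →
        ∀ N : ℕ, 2 ≤ N →
        ∀ (ρ : Measure (Torus d)), IsProbabilityMeasure ρ →
        ∀ (ρN : Measure (Fin N → Torus d)), IsProbabilityMeasure ρN →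
          relEntropy ρN (Measure.pi fun _ => ρ) < ⊤ →
          ∫ x : Fin N → Torus d,
              ∑' k : {k : Fin d → ℤ // k ≠ 0},
                (1 + ∑ j, ((k.1 j : ℝ)) ^ 2) ^ (-α) *
                  ‖pairK₂ d K k.1 (empiricalMeasure d N x) - pairK₂ d K k.1 ρ‖ ^ 2
            ∂ρN
          ≤ C / N * ((relEntropy ρN (Measure.pi fun _ => ρ)).toReal + 1)) := by
  obtain ⟨hbounded, hsingular⟩ := statement8_general d α B
  obtain ⟨C₁, hC₁, h₁⟩ := hbounded (by linarith)
  obtain ⟨C₂, hC₂, h₂⟩ := hsingular hα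
  exact ⟨⟨C₁, hC₁, fun K hK hB N hN ↦ h₁ K hK hB N (by lia)⟩,
    ⟨C₂, hC₂, fun K hK _ _ hB N hN ↦ h₂ K hK hB N (by lia)⟩⟩
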